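/- Let C be a non-circular component of G such that F(μ) > 0 for every loop μ in C. Then there is a unique β₀ ∈ ℝ such that ρ(A(β₀)^C) = 1; this β₀ is positive, and for every β ∈ ℝ one has ρ(A(β)^C) < 1 if and only if β > β₀. -/

import Mathlib

open Filter Finset

/-- The spectral radius of a real matrix, `ρ(M) = lim_n ‖Mⁿ‖^{1/n}`
(computed with the entrywise ℓ¹-norm, and as a `limsup` so that it is always defined;
it is `0` for the matrix over the empty index type). -/
noncomputable def specRad {n : Type*} [Fintype n] [DecidableEq n] (M : Matrix n n ℝ) : ℝ :=
  Filter.limsup (fun k : ℕ => (∑ i, ∑ j, |(M ^ k) i j|) ^ ((1 : ℝ) / (k : ℝ))) Filter.atTop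

/-- The spectral radius `ρ(B^S)` of the submatrix of `B` obtained by restricting to `S × S`. -/
noncomputable def specRadOn {V : Type*} [Fintype V] (B : Matrix V V ℝ) (S : Set V) : ℝ :=
  letI : Fintype S := (Set.toFinite S).fintype
  letI : DecidableEq S := Classical.decEq _
  specRad (fun i j : S => B i.1 j.1)

variable {V E : Type*}

/-- Consecutive edges of the list match up: `r(eᵢ) = s(eᵢ₊₁)`. -/
def ChainOK (src rng : E → V) (μ : List E) : Prop :=
  List.Chain' (fun e f => rng e = src f) μ

/-- A loop: a nonempty path `μ = e₁⋯eₙ` with `s(e₁) = r(eₙ)`. -/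
def IsLoop (src rng : E → V) (μ : List E) : Prop :=
  ∃ h : μ ≠ [], ChainOK src rng μ ∧ src (μ.head h) = rng (μ.getLast h)

/-- A loop lying in the vertex set `C`. -/
def LoopIn (src rng : E → V) (C : Set V) (μ : List E) : Prop :=
  IsLoop src rng μ ∧ ∀ e ∈ μ, src e ∈ C ∧ rng e ∈ C

/-- `v ⤳ w`: there is a (possibly length-0) path from `v` to `w`. -/
def GReaches (src rng : E → V) (v w : V) : Prop :=
  v = w ∨ ∃ μ : List E, ∃ h : μ ≠ [],
    ChainOK src rng μ ∧ src (μ.head h) = v ∧ rng (μ.getLast h) = w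

/-- The closure of a set of vertices: all vertices that reach it. -/
def GClosure (src rng : E → V) (C : Set V) : Set V :=
  {v | ∃ w ∈ C, GReaches src rng v w}

/-- A component: an equivalence class of `v ∼ w` (mutual reachability) containing a loop. -/
def GIsComponent (src rng : E → V) (C : Set V) : Prop :=
  (∃ v, C = {w | GReaches src rng v w ∧ GReaches src rng w v}) ∧
  ∃ μ : List E, LoopIn src rng C μ

/-- The property that the loop `μ` witnesses circularity of the component `C`: `μ` is a simple
loop visiting every vertex of `C`, and containing every edge of the graph joining vertices
of `C`. -/
def CircularWitness (src rng : E → V) (C : Set V) (μ : List E) : Prop :=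
  LoopIn src rng C μ ∧ (μ.map src).Nodup ∧
  (∀ v ∈ C, v ∈ μ.map src) ∧
  (∀ e : E, src e ∈ C → rng e ∈ C → e ∈ μ)

/-- A circular component: a component containing, up to the choice of starting vertex,
exactly one loop. -/
def IsCircular (src rng : E → V) (C : Set V) : Prop :=
  GIsComponent src rng C ∧ ∃ μ : List E, CircularWitness src rng C μ

/-- The matrix `A(β)` with entries `A(β)_{vw} = Σ_{e : v → w} e^{-β F(e)}`. -/
noncomputable def Amat [Fintype E] [DecidableEq V] (src rng : E → V) (F : E → ℝ) (β : ℝ) :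
    Matrix V V ℝ :=
  fun v w => ∑ e ∈ Finset.univ.filter (fun e => src e = v ∧ rng e = w), Real.exp (-β * F e)

/-- `F` extended to paths: `F(e₁⋯eₙ) = F(e₁) + ⋯ + F(eₙ)`. -/
def Fpath (F : E → ℝ) (μ : List E) : ℝ := (μ.map F).sum


set_option linter.unusedSectionVars false

section Analytic
variable {n : Type*} [Fintype n] [DecidableEq n]

noncomputable def nrm (M : Matrix n n ℝ) : ℝ := ∑ i, ∑ j, |M i j|

lemma nrm_nonneg (M : Matrix n n ℝ) : 0 ≤ nrm M :=
  Finset.sum_nonneg fun _ _ => Finset.sum_nonneg fun _ _ => abs_nonneg _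

lemma entry_le_nrm (M : Matrix n n ℝ) (i j : n) : |M i j| ≤ nrm M := by
  unfold nrm
  calc |M i j| ≤ ∑ j, |M i j| :=
        Finset.single_le_sum (f := fun j => |M i j|) (fun _ _ => abs_nonneg _) (Finset.mem_univ j)
    _ ≤ _ := Finset.single_le_sum (f := fun i => ∑ j, |M i j|)
        (fun _ _ => Finset.sum_nonneg fun _ _ => abs_nonneg _) (Finset.mem_univ i)

lemma row_le_nrm (M : Matrix n n ℝ) (i : n) : ∑ j, |M i j| ≤ nrm M :=
  Finset.single_le_sum (f := fun i => ∑ j, |M i j|)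
        (fun _ _ => Finset.sum_nonneg fun _ _ => abs_nonneg _) (Finset.mem_univ i)

lemma nrm_mul_le (M N : Matrix n n ℝ) : nrm (M * N) ≤ nrm M * nrm N := by
  calc nrm (M * N) ≤ ∑ i, ∑ j, ∑ k, |M i k| * |N k j| := by
        unfold nrm
        refine Finset.sum_le_sum fun i _ => Finset.sum_le_sum fun j _ => ?_
        rw [Matrix.mul_apply]
        refine (Finset.abs_sum_le_sum_abs _ _).trans (le_of_eq ?_)
        simp [abs_mul]
    _ = ∑ i, ∑ k, |M i k| * ∑ j, |N k j| := by
        refine Finset.sum_congr rfl fun i _ => ?_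
        rw [Finset.sum_comm]
        simp [Finset.mul_sum]
    _ ≤ ∑ i, ∑ k, |M i k| * nrm N := by
        refine Finset.sum_le_sum fun i _ => Finset.sum_le_sum fun k _ => ?_
        exact mul_le_mul_of_nonneg_left (row_le_nrm N k) (abs_nonneg _)
    _ = nrm M * nrm N := by
        simp [nrm, Finset.sum_mul]

lemma nrm_pow_le (M : Matrix n n ℝ) (k : ℕ) : nrm (M ^ (k+1)) ≤ nrm M ^ (k+1) := by
  induction k with
  | zero => simp
  | succ k ih =>
    rw [pow_succ, pow_succ (nrm M)]
    exact (nrm_mul_le _ _).trans (mul_le_mul_of_nonneg_right ih (nrm_nonneg _))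

lemma root_le (M : Matrix n n ℝ) (k : ℕ) (hk : k ≠ 0) :
    (nrm (M ^ k)) ^ ((1 : ℝ) / (k : ℝ)) ≤ nrm M := by
  obtain ⟨m, rfl⟩ := Nat.exists_eq_succ_of_ne_zero hk
  have h := nrm_pow_le M m
  calc _ ≤ (nrm M ^ (m+1)) ^ ((1 : ℝ) / ((m+1 : ℕ) : ℝ)) :=
        Real.rpow_le_rpow (nrm_nonneg _) h (by positivity)
    _ = nrm M := by
        rw [one_div, Real.pow_rpow_inv_natCast (nrm_nonneg _) (by omega)]

lemma root_bdd (M : Matrix n n ℝ) : IsBoundedUnder (· ≤ ·) atTop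
    (fun k : ℕ => (nrm (M ^ k)) ^ ((1 : ℝ) / (k : ℝ))) := by
  refine ⟨nrm M, ?_⟩
  rw [eventually_map]
  filter_upwards [eventually_ne_atTop 0] with k hk using root_le M k hk

lemma root_cobdd (M : Matrix n n ℝ) : IsCoboundedUnder (· ≤ ·) atTop
    (fun k : ℕ => (nrm (M ^ k)) ^ ((1 : ℝ) / (k : ℝ))) := by
  refine IsBoundedUnder.isCoboundedUnder_le ⟨0, ?_⟩
  rw [eventually_map]
  exact Eventually.of_forall fun k => Real.rpow_nonneg (nrm_nonneg _) _

lemma specRad_eq (M : Matrix n n ℝ) :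
    specRad M = limsup (fun k : ℕ => (nrm (M ^ k)) ^ ((1 : ℝ) / (k : ℝ))) atTop := rfl

lemma specRad_le_mul (M N : Matrix n n ℝ) (r D : ℝ) (hr : 0 < r) (hD : 0 < D)
    (h : ∀ k, nrm (M ^ k) ≤ D * r ^ k * nrm (N ^ k)) : specRad M ≤ r * specRad N := by
  have key : ∀ t, specRad N < t → specRad M ≤ r * t := by
    intro t ht
    have h1 := eventually_lt_of_limsup_lt ht (root_bdd N)
    have h2 : Tendsto (fun k : ℕ => D ^ ((1:ℝ) / (k:ℝ)) * (r * t)) atTop (nhds (1 * (r * t))) := by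
      refine Tendsto.mul_const _ ?_
      have : Tendsto (fun k : ℕ => (1:ℝ) / (k:ℝ)) atTop (nhds 0) := tendsto_one_div_atTop_nhds_zero_nat
      have h3 := (Real.continuousAt_const_rpow (a := D) (b := 0) hD.ne').tendsto.comp this
      rw [Real.rpow_zero] at h3
      exact h3
    rw [one_mul] at h2
    rw [← h2.limsup_eq, specRad_eq]
    refine limsup_le_limsup ?_ (root_cobdd M) h2.isBoundedUnder_le
    filter_upwards [h1, eventually_ne_atTop 0] with k hk hk0
    calc _ ≤ (D * r ^ k * nrm (N ^ k)) ^ ((1:ℝ) / (k:ℝ)) :=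
          Real.rpow_le_rpow (nrm_nonneg _) (h k) (by positivity)
      _ = D ^ ((1:ℝ) / (k:ℝ)) * (r * (nrm (N ^ k)) ^ ((1:ℝ) / (k:ℝ))) := by
          rw [Real.mul_rpow (by positivity) (nrm_nonneg _), Real.mul_rpow hD.le (by positivity)]
          rw [one_div, Real.pow_rpow_inv_natCast hr.le hk0, mul_assoc]
      _ ≤ _ := by
          have : 0 ≤ D ^ ((1:ℝ) / (k:ℝ)) := Real.rpow_nonneg hD.le _
          gcongr
          exact hk.le
  have : specRad M / r ≤ specRad N := by
    refine le_of_forall_gt_imp_ge_of_dense fun t ht => ?_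
    rw [div_le_iff₀ hr, mul_comm]
    exact key t ht
  rwa [div_le_iff₀ hr, mul_comm] at this

lemma one_lt_specRad (M : Matrix n n ℝ) (N : ℕ) (hN : N ≠ 0)
    (h : ∀ k, (2:ℝ) ^ k ≤ nrm (M ^ (N * k))) : 1 < specRad M := by
  have h1 : (1:ℝ) < 2 ^ ((1:ℝ) / N) := Real.one_lt_rpow (by norm_num) (by positivity)
  refine h1.trans_le ?_
  rw [specRad_eq]
  refine le_limsup_of_frequently_le ?_ (root_bdd M)
  rw [frequently_atTop]
  intro a
  refine ⟨N * (a + 1), by nlinarith [Nat.pos_of_ne_zero hN], ?_⟩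
  calc (2:ℝ) ^ ((1:ℝ) / N) = ((2:ℝ) ^ (a+1)) ^ ((1:ℝ) / ((N * (a+1) : ℕ) : ℝ)) := by
        rw [← Real.rpow_natCast, ← Real.rpow_mul (by norm_num)]
        congr 1
        push_cast
        have : (N:ℝ) ≠ 0 := by exact_mod_cast hN
        field_simp
    _ ≤ _ := Real.rpow_le_rpow (by positivity) (h _) (by positivity)

lemma exists_root_of_decay (ρ : ℝ → ℝ) (c K : ℝ) (hc : 0 < c)
    (h0 : 1 < ρ 0)
    (hup : ∀ β δ, 0 ≤ δ → ρ (β + δ) ≤ Real.exp (-(c * δ)) * ρ β)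
    (hlo : ∀ β δ, 0 ≤ δ → ρ β ≤ Real.exp (K * δ) * ρ (β + δ)) :
    ∃ β₀ : ℝ, 0 < β₀ ∧ ρ β₀ = 1 ∧ (∀ β, ρ β = 1 → β = β₀) ∧ (∀ β, ρ β < 1 ↔ β₀ < β) := by
  have hpos : ∀ β, 0 < ρ β := by
    intro β
    rcases le_total 0 β with h | h
    · have := hlo 0 β h
      rw [zero_add] at this
      exact pos_of_mul_pos_right (by linarith) (Real.exp_pos _).le
    · have := hup β (-β) (by linarith)
      rw [add_neg_cancel] at this
      exact pos_of_mul_pos_right (by linarith) (Real.exp_pos _).le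
  have hL1 : ∀ β δ, 0 ≤ δ → Real.log (ρ (β + δ)) ≤ Real.log (ρ β) - c * δ := by
    intro β δ h
    have := Real.log_le_log (hpos _) (hup β δ h)
    rw [Real.log_mul (Real.exp_ne_zero _) (hpos _).ne', Real.log_exp] at this
    linarith
  have hL2 : ∀ β δ, 0 ≤ δ → Real.log (ρ β) ≤ Real.log (ρ (β + δ)) + K * δ := by
    intro β δ h
    have := Real.log_le_log (hpos _) (hlo β δ h)
    rw [Real.log_mul (Real.exp_ne_zero _) (hpos _).ne', Real.log_exp] at this
    linarith
  set g : ℝ → ℝ := fun β => Real.log (ρ β) with hg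
  have hanti : StrictAnti g := by
    intro a b hab
    have := hL1 a (b - a) (by linarith)
    rw [add_sub_cancel] at this
    have h2 : 0 < c * (b - a) := mul_pos hc (by linarith)
    show Real.log _ < Real.log _
    linarith
  have hcont : Continuous g := by
    have hlip : ∀ a b, a ≤ b → |g a - g b| ≤ K * (b - a) := by
      intro a b hab
      have h1 := hL2 a (b - a) (by linarith)
      rw [add_sub_cancel] at h1
      have h2 := hanti.antitone hab
      rw [abs_of_nonneg (by linarith)]
      show Real.log _ - Real.log _ ≤ _
      linarith
    have : LipschitzWith (Real.toNNReal K) g := by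
      refine LipschitzWith.of_dist_le' (K := K) ?_
      intro a b
      rw [Real.dist_eq, Real.dist_eq]
      rcases le_total a b with h | h
      · rw [abs_sub_comm a b, abs_of_nonneg (sub_nonneg.2 h)]; exact hlip a b h
      · rw [abs_sub_comm, abs_of_nonneg (sub_nonneg.2 h)]; exact hlip b a h
    exact this.continuous
  have hg0 : 0 < g 0 := Real.log_pos h0
  have hB : g (g 0 / c) ≤ 0 := by
    have := hL1 0 (g 0 / c) (by positivity)
    rw [zero_add, mul_div_cancel₀ _ hc.ne'] at this
    show Real.log _ ≤ 0
    have h3 : g 0 = Real.log (ρ 0) := rfl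
    linarith
  obtain ⟨β₀, hm, hβ⟩ := intermediate_value_Icc' (show (0:ℝ) ≤ g 0 / c by positivity)
    hcont.continuousOn ⟨hB, hg0.le⟩
  have h1 : ρ β₀ = 1 := Real.eq_one_of_pos_of_log_eq_zero (hpos _) hβ
  refine ⟨β₀, ?_, h1, ?_, ?_⟩
  · rcases hm.1.eq_or_lt with h | h
    · rw [← h] at hβ; linarith
    · exact h
  · intro β h
    apply hanti.injective
    rw [hβ]; simp [hg, h]
  · intro β
    rw [← hanti.lt_iff_gt (a := β) (b := β₀), hβ]
    exact (Real.log_neg_iff (hpos β)).symm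

end Analytic

section Mat
variable {n : Type*} [Fintype n] [DecidableEq n]

lemma pow_entry_nonneg (M : Matrix n n ℝ) (hM : ∀ i j, 0 ≤ M i j) (k : ℕ) :
    ∀ i j, 0 ≤ (M ^ k) i j := by
  induction k with
  | zero => intro i j; rw [pow_zero, Matrix.one_apply]; split_ifs <;> norm_num
  | succ k ih =>
    intro i j
    rw [pow_succ, Matrix.mul_apply]
    exact Finset.sum_nonneg fun l _ => mul_nonneg (ih _ _) (hM _ _)

lemma pow_entry_le (M N : Matrix n n ℝ) (hM : ∀ i j, 0 ≤ M i j) (hN : ∀ i j, 0 ≤ N i j)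
    (r : ℝ) (hr : 0 < r) (d : n → ℝ) (hd : ∀ i, 0 < d i)
    (h : ∀ i j, M i j ≤ r * (d i / d j) * N i j) (k : ℕ) :
    ∀ i j, (M ^ k) i j ≤ r ^ k * (d i / d j) * (N ^ k) i j := by
  induction k with
  | zero =>
    intro i j
    rw [pow_zero, pow_zero, pow_zero, Matrix.one_apply]
    split_ifs with hij
    · subst hij; rw [div_self (hd i).ne']; norm_num
    · simp
  | succ k ih =>
    intro i j
    rw [pow_succ, Matrix.mul_apply, pow_succ N, Matrix.mul_apply, Finset.mul_sum]
    refine Finset.sum_le_sum fun l _ => ?_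
    have h0 : 0 ≤ r ^ k * (d i / d l) * (N ^ k) i l := by
      have := pow_entry_nonneg N hN k i l
      have := hd i
      have := hd l
      positivity
    refine (mul_le_mul (ih i l) (h l j) (hM l j) h0).trans (le_of_eq ?_)
    have := (hd l).ne'
    have := (hd j).ne'
    field_simp
    ring

lemma specRad_le_of_entry (M N : Matrix n n ℝ) (hM : ∀ i j, 0 ≤ M i j) (hN : ∀ i j, 0 ≤ N i j)
    (r : ℝ) (hr : 0 < r) (d : n → ℝ) (hd : ∀ i, 0 < d i)
    (h : ∀ i j, M i j ≤ r * (d i / d j) * N i j) : specRad M ≤ r * specRad N := by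
  have hnn : ∀ i j, 0 ≤ d i / d j := fun i j => (div_pos (hd i) (hd j)).le
  have hD : ∀ i j, d i / d j ≤ (∑ i, ∑ j, d i / d j) + 1 := by
    intro i j
    have h1 : d i / d j ≤ ∑ j, d i / d j :=
      Finset.single_le_sum (f := fun j => d i / d j) (fun _ _ => hnn _ _) (Finset.mem_univ j)
    have h2 : ∑ j, d i / d j ≤ ∑ i, ∑ j, d i / d j :=
      Finset.single_le_sum (f := fun i => ∑ j, d i / d j)
        (fun _ _ => Finset.sum_nonneg fun _ _ => hnn _ _) (Finset.mem_univ i)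
    linarith
  have hD0 : 0 < (∑ i, ∑ j, d i / d j) + 1 := by
    have : 0 ≤ ∑ i, ∑ j, d i / d j := Finset.sum_nonneg fun _ _ => Finset.sum_nonneg fun _ _ => hnn _ _
    linarith
  refine specRad_le_mul M N r _ hr hD0 fun k => ?_
  unfold nrm
  rw [Finset.mul_sum]
  refine Finset.sum_le_sum fun i _ => ?_
  rw [Finset.mul_sum]
  refine Finset.sum_le_sum fun j _ => ?_
  have hNk := pow_entry_nonneg N hN k i j
  rw [abs_of_nonneg (pow_entry_nonneg M hM k i j), abs_of_nonneg hNk]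
  refine (pow_entry_le M N hM hN r hr d hd h k i j).trans ?_
  refine mul_le_mul_of_nonneg_right ?_ hNk
  rw [mul_comm]
  exact mul_le_mul_of_nonneg_right (hD i j) (by positivity)

/-- `x_k = M^k 1`. -/
noncomputable def rowv (M : Matrix n n ℝ) (k : ℕ) : n → ℝ := fun i => ∑ j, (M ^ k) i j

lemma rowv_zero (M : Matrix n n ℝ) (i : n) : rowv M 0 i = 1 := by
  simp [rowv, Matrix.one_apply]

lemma rowv_add (M : Matrix n n ℝ) (a b : ℕ) (i : n) :
    rowv M (a + b) i = ∑ l, (M ^ a) i l * rowv M b l := by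
  simp only [rowv, pow_add, Matrix.mul_apply, Finset.mul_sum]
  rw [Finset.sum_comm]

lemma rowv_succ (M : Matrix n n ℝ) (k : ℕ) (i : n) :
    rowv M (k + 1) i = ∑ l, M i l * rowv M k l := by
  rw [add_comm, rowv_add, pow_one]

lemma one_lt_specRad_of_graph (M : Matrix n n ℝ) (hM : ∀ i j, 0 ≤ M i j)
    (hout : ∀ i, ∃ j, 1 ≤ M i j) (v : n) (hv : 2 ≤ ∑ j, M v j)
    (hreach : ∀ u, Relation.ReflTransGen (fun i j => 1 ≤ M i j) u v) : 1 < specRad M := by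
  have hnn : ∀ k i, 0 ≤ rowv M k i := fun k i =>
    Finset.sum_nonneg fun j _ => pow_entry_nonneg M hM k i j
  have hstep : ∀ k i j, 1 ≤ M i j → rowv M k j ≤ rowv M (k+1) i := by
    intro k i j hij
    rw [rowv_succ]
    calc rowv M k j ≤ M i j * rowv M k j := le_mul_of_one_le_left (hnn _ _) hij
      _ ≤ _ := Finset.single_le_sum (f := fun l => M i l * rowv M k l)
          (fun l _ => mul_nonneg (hM _ _) (hnn _ _)) (Finset.mem_univ j)
  have hmono1 : ∀ k i, rowv M k i ≤ rowv M (k+1) i := by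
    intro k
    induction k with
    | zero =>
      intro i
      obtain ⟨j, hj⟩ := hout i
      have := hstep 0 i j hj
      rw [rowv_zero] at this ⊢
      exact this
    | succ k ih =>
      intro i
      rw [rowv_succ, rowv_succ M (k+1)]
      exact Finset.sum_le_sum fun l _ => mul_le_mul_of_nonneg_left (ih l) (hM _ _)
  have hmono : ∀ i, Monotone fun k => rowv M k i := fun i => monotone_nat_of_le_succ fun k => hmono1 k i
  have hex : ∀ u, ∃ k, 2 ≤ rowv M k u := by
    intro u
    induction hreach u using Relation.ReflTransGen.head_induction_on with
    | refl =>
      refine ⟨1, ?_⟩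
      simpa [rowv] using hv
    | head h _ ih =>
      obtain ⟨k, hk⟩ := ih
      exact ⟨k+1, hk.trans (hstep _ _ _ h)⟩
  choose f hf using hex
  obtain ⟨N, hN⟩ : ∃ N, N ≠ 0 ∧ ∀ u, f u ≤ N :=
    ⟨(∑ u, f u) + 1, by omega, fun u =>
      (Finset.single_le_sum (f := f) (fun _ _ => Nat.zero_le _) (Finset.mem_univ u)).trans (by omega)⟩
  have h2 : ∀ u, 2 ≤ rowv M N u := fun u => (hf u).trans (hmono u (hN.2 u))
  have hpow : ∀ k u, (2:ℝ) ^ k ≤ rowv M (N * k) u := by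
    intro k
    induction k with
    | zero => intro u; rw [mul_zero, rowv_zero, pow_zero]
    | succ k ih =>
      intro u
      rw [mul_add, mul_one, add_comm (N * k) N, rowv_add]
      calc (2:ℝ) ^ (k+1) = 2 * 2 ^ k := by ring
        _ ≤ rowv M N u * 2 ^ k := by gcongr; exact h2 u
        _ = ∑ l, (M ^ N) u l * 2 ^ k := by rw [rowv, Finset.sum_mul]
        _ ≤ _ := Finset.sum_le_sum fun l _ =>
          mul_le_mul_of_nonneg_left (ih l) (pow_entry_nonneg M hM N u l)
  refine one_lt_specRad M N hN.1 fun k => (hpow k v).trans ?_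
  refine le_trans ?_ (row_le_nrm _ v)
  exact Finset.sum_le_sum fun j _ => le_abs_self _

end Mat

section Walks
variable {V E : Type*} (src rng : E → V)

/-- Walks from `v` to `w` inside `C`. -/
def Wk (C : Set V) : V → List E → V → Prop
  | v, [], w => v = w
  | v, e :: μ, w => src e = v ∧ src e ∈ C ∧ rng e ∈ C ∧ Wk C (rng e) μ w

variable {src rng}

lemma Wk_append {C : Set V} {v w : V} {a b : List E} :
    Wk src rng C v (a ++ b) w ↔ ∃ u, Wk src rng C v a u ∧ Wk src rng C u b w := by
  induction a generalizing v with
  | nil => simp [Wk]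
  | cons e a ih =>
    simp only [List.cons_append, Wk, ih]
    constructor
    · rintro ⟨h1, h2, h3, u, h4, h5⟩
      exact ⟨u, ⟨h1, h2, h3, h4⟩, h5⟩
    · rintro ⟨u, ⟨h1, h2, h3, h4⟩, h5⟩
      exact ⟨h1, h2, h3, u, h4, h5⟩

lemma Wk_det {C : Set V} {v w w' : V} {a : List E}
    (h : Wk src rng C v a w) (h' : Wk src rng C v a w') : w = w' := by
  induction a generalizing v with
  | nil => simp only [Wk] at h h'; rw [← h, ← h']
  | cons e a ih => exact ih h.2.2.2 h'.2.2.2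

lemma Wk_path {C : Set V} {v w : V} {a : List E} (h : Wk src rng C v a w) (ha : a ≠ []) :
    ChainOK src rng a ∧ src (a.head ha) = v ∧ rng (a.getLast ha) = w ∧
      ∀ e ∈ a, src e ∈ C ∧ rng e ∈ C := by
  induction a generalizing v with
  | nil => exact absurd rfl ha
  | cons e a ih =>
    obtain ⟨h1, h2, h3, h4⟩ := h
    cases a with
    | nil =>
      simp only [Wk] at h4
      refine ⟨List.isChain_singleton _, h1, h4, ?_⟩
      intro f hf
      rw [List.mem_singleton] at hf
      subst hf
      exact ⟨h2, h3⟩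
    | cons f a =>
      obtain ⟨k1, k2, k3, k4⟩ := ih h4 (by simp)
      refine ⟨List.isChain_cons_cons.2 ⟨k2.symm, k1⟩, h1, ?_, ?_⟩
      · rw [List.getLast_cons (by simp)]; exact k3
      · intro g hg
        rcases List.mem_cons.1 hg with rfl | hg
        · exact ⟨h2, h3⟩
        · exact k4 g hg

lemma Wk_of_path {C : Set V} {a : List E} (ha : a ≠ []) (hc : ChainOK src rng a)
    (hC : ∀ e ∈ a, src e ∈ C ∧ rng e ∈ C) :
    Wk src rng C (src (a.head ha)) a (rng (a.getLast ha)) := by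
  induction a with
  | nil => exact absurd rfl ha
  | cons e a ih =>
    have he := hC e (by simp)
    cases a with
    | nil => exact ⟨rfl, he.1, he.2, rfl⟩
    | cons f a =>
      have hc' := List.isChain_cons_cons.1 hc
      have := ih (by simp) hc'.2 (fun g hg => hC g (List.mem_cons_of_mem _ hg))
      refine ⟨rfl, he.1, he.2, ?_⟩
      rw [List.getLast_cons (by simp)]
      rw [hc'.1]
      exact this

lemma Wk_loop {C : Set V} {v : V} {a : List E} (h : Wk src rng C v a v) (ha : a ≠ []) :
    LoopIn src rng C a := by
  obtain ⟨h1, h2, h3, h4⟩ := Wk_path h ha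
  exact ⟨⟨ha, h1, h2.trans h3.symm⟩, h4⟩

lemma loop_Wk {C : Set V} {a : List E} (h : LoopIn src rng C a) :
    ∃ v, a ≠ [] ∧ Wk src rng C v a v := by
  obtain ⟨⟨ha, h1, h2⟩, h3⟩ := h
  refine ⟨src (a.head ha), ha, ?_⟩
  have := Wk_of_path ha h1 h3
  rwa [← h2] at this

lemma greaches_iff {v w : V} :
    GReaches src rng v w ↔ ∃ a, Wk src rng Set.univ v a w := by
  constructor
  · rintro (rfl | ⟨a, ha, h1, rfl, rfl⟩)
    · exact ⟨[], rfl⟩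
    · exact ⟨a, Wk_of_path ha h1 (by simp)⟩
  · rintro ⟨a, h⟩
    by_cases ha : a = []
    · subst ha; exact Or.inl h
    · obtain ⟨h1, h2, h3, -⟩ := Wk_path h ha
      exact Or.inr ⟨a, ha, h1, h2, h3⟩

lemma greaches_trans {u v w : V} (h : GReaches src rng u v) (h' : GReaches src rng v w) :
    GReaches src rng u w := by
  rw [greaches_iff] at *
  obtain ⟨a, ha⟩ := h
  obtain ⟨b, hb⟩ := h'
  exact ⟨a ++ b, Wk_append.2 ⟨_, ha, hb⟩⟩

lemma comp_walk {C : Set V} (hC : GIsComponent src rng C) {u w : V} (hu : u ∈ C) (hw : w ∈ C) :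
    ∃ a, Wk src rng C u a w := by
  obtain ⟨⟨v0, rfl⟩, -⟩ := hC
  obtain ⟨a, ha⟩ := greaches_iff.1 (greaches_trans hu.2 hw.1)
  refine ⟨a, ?_⟩
  induction a generalizing u with
  | nil => exact ha
  | cons e a ih =>
    obtain ⟨h1, -, -, h4⟩ := ha
    have hr : rng e ∈ {w | GReaches src rng v0 w ∧ GReaches src rng w v0} := by
      refine ⟨greaches_trans hu.1 (greaches_iff.2 ⟨[e], h1, trivial, trivial, rfl⟩), ?_⟩
      exact greaches_trans (greaches_iff.2 ⟨a, h4⟩) hw.2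
    exact ⟨h1, h1 ▸ hu, hr, ih hr h4⟩

lemma comp_out {C : Set V} (hC : GIsComponent src rng C) {u : V} (hu : u ∈ C) :
    ∃ e, src e = u ∧ rng e ∈ C := by
  obtain ⟨μ, hμ⟩ := hC.2
  obtain ⟨x, hne, hx⟩ := loop_Wk hμ
  obtain ⟨e, ν, rfl⟩ := List.exists_cons_of_ne_nil hne
  obtain ⟨h1, h2, h3, h4⟩ := hx
  obtain ⟨a, ha⟩ := comp_walk hC hu (h1 ▸ h2)
  cases a with
  | nil => simp only [Wk] at ha; exact ⟨e, h1.trans ha.symm, h3⟩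
  | cons f a => exact ⟨f, ha.1, ha.2.2.1⟩

lemma Wk_shorter {C : Set V} {v w : V} {a : List E} (h : Wk src rng C v a w)
    (hn : ¬ (a.map src).Nodup) :
    ∃ u b, b ≠ [] ∧ Wk src rng C u b u ∧ b.length < a.length := by
  induction a generalizing v with
  | nil => simp at hn
  | cons e a ih =>
    obtain ⟨h1, h2, h3, h4⟩ := h
    by_cases ht : (a.map src).Nodup
    · have hmem : src e ∈ a.map src := by
        by_contra hc
        exact hn (by rw [List.map_cons, List.nodup_cons]; exact ⟨hc, ht⟩)
      obtain ⟨f, hf, hfe⟩ := List.mem_map.1 hmem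
      obtain ⟨s, t, rfl⟩ := List.append_of_mem hf
      obtain ⟨u, k1, k2⟩ := Wk_append.1 h4
      refine ⟨src e, e :: s, by simp, ⟨rfl, h2, h3, ?_⟩, by simp⟩
      rw [← hfe, k2.1]; exact k1
    · obtain ⟨u, b, k1, k2, k3⟩ := ih h4 ht
      exact ⟨u, b, k1, k2, by simp; omega⟩

lemma Wk_rng_mem {C : Set V} {v w : V} {a : List E} (h : Wk src rng C v a w) {e : E}
    (he : e ∈ a) : rng e ∈ a.map src ∨ rng e = w := by
  induction a generalizing v with
  | nil => simp at he
  | cons f a ih =>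
    obtain ⟨h1, h2, h3, h4⟩ := h
    rcases List.mem_cons.1 he with rfl | he
    · cases a with
      | nil => exact Or.inr h4
      | cons g a => left; simp [h4.1]
    · rcases ih h4 he with h | h
      · left; rw [List.map_cons]; exact List.mem_cons_of_mem _ h
      · exact Or.inr h

lemma exists_branch {C : Set V} (hC : GIsComponent src rng C) (hnc : ¬ IsCircular src rng C) :
    ∃ e f, e ≠ f ∧ src e = src f ∧ src e ∈ C ∧ rng e ∈ C ∧ rng f ∈ C := by
  by_contra hcon
  push Not at hcon
  apply hnc
  refine ⟨hC, ?_⟩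
  classical
  have hex : ∃ m, ∃ b : List E, b.length = m ∧ b ≠ [] ∧ ∃ u, Wk src rng C u b u := by
    obtain ⟨μ, hμ⟩ := hC.2
    obtain ⟨x, hne, hx⟩ := loop_Wk hμ
    exact ⟨_, μ, rfl, hne, x, hx⟩
  obtain ⟨b, hb, hne, x, hx⟩ := Nat.find_spec hex
  have huniq : ∀ e f, src e = src f → src e ∈ C → rng e ∈ C → rng f ∈ C → e = f := by
    intro e f h1 h2 h3 h4
    by_contra hef
    exact hcon e f hef h1 h2 h3 h4
  have hin := (Wk_path hx hne).2.2.2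
  have hxs : x ∈ b.map src := by
    obtain ⟨e, ν, rfl⟩ := List.exists_cons_of_ne_nil hne
    simp [hx.1]
  have hxC : x ∈ C := by
    obtain ⟨e, he, rfl⟩ := List.mem_map.1 hxs
    exact (hin e he).1
  have hedge : ∀ e, src e ∈ b.map src → rng e ∈ C → e ∈ b := by
    intro e he hr
    obtain ⟨f, hf, hfe⟩ := List.mem_map.1 he
    have := huniq f e hfe (hin f hf).1 (hin f hf).2 hr
    exact this ▸ hf
  have hwalk : ∀ (a : List E) u w, u ∈ b.map src → Wk src rng C u a w → w ∈ b.map src := by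
    intro a
    induction a with
    | nil => intro u w hu h; simp only [Wk] at h; exact h ▸ hu
    | cons e a ih =>
      rintro u w hu ⟨h1, h2, h3, h4⟩
      refine ih _ _ ?_ h4
      rcases Wk_rng_mem hx (hedge e (h1 ▸ hu) h3) with h | h
      · exact h
      · rw [h]; exact hxs
  have hall : ∀ v ∈ C, v ∈ b.map src := by
    intro v hv
    obtain ⟨a, ha⟩ := comp_walk hC hxC hv
    exact hwalk a x v hxs ha
  refine ⟨b, Wk_loop hx hne, ?_, hall, fun e h1 h2 => hedge e (hall _ h1) h2⟩
  by_contra hn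
  obtain ⟨u, b', k1, k2, k3⟩ := Wk_shorter hx hn
  have := Nat.find_min' hex ⟨b', rfl, k1, u, k2⟩
  omega

lemma Wk_pigeon [Fintype V] {C : Set V} {v w : V} {μ : List E} (h : Wk src rng C v μ w)
    (hl : Fintype.card V ≤ μ.length) :
    ∃ a b d u, μ = a ++ b ++ d ∧ b ≠ [] ∧ Wk src rng C v a u ∧ Wk src rng C u b u ∧
      Wk src rng C u d w := by
  have hex : ∀ i : Fin (μ.length + 1), ∃ u, Wk src rng C v (μ.take i) u ∧
      Wk src rng C u (μ.drop i) w := by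
    intro i
    rw [← Wk_append, List.take_append_drop]
    exact h
  choose f hf using hex
  obtain ⟨i, j, hij, hfij⟩ := Fintype.exists_ne_map_eq_of_card_lt f (by simp; omega)
  wlog hlt : i < j generalizing i j
  · exact this j i hij.symm hfij.symm (lt_of_le_of_ne (not_lt.1 hlt) hij.symm)
  have hlt' : (i : ℕ) < j := hlt
  have hj := j.2
  have e1 : μ.drop i = (μ.drop i).take (j - i) ++ μ.drop j := by
    conv_lhs => rw [← List.take_append_drop (j - i : ℕ) (μ.drop i)]
    rw [List.drop_drop]
    congr 2
    omega
  have e2 : μ.take j = μ.take i ++ (μ.drop i).take (j - i) := by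
    rw [← List.take_add]; congr 1; omega
  have hd := (hf i).2
  rw [e1] at hd
  obtain ⟨u', k1, k2⟩ := Wk_append.1 hd
  have hj' := (hf j).1
  rw [e2] at hj'
  have := Wk_det hj' (Wk_append.2 ⟨_, (hf i).1, k1⟩)
  rw [← this, ← hfij] at k1 k2
  refine ⟨μ.take i, (μ.drop i).take (j - i), μ.drop j, f i, ?_, ?_, (hf i).1, k1, k2⟩
  · rw [List.append_assoc, ← e1, List.take_append_drop]
  · intro hc
    have := congrArg List.length hc
    simp at this
    omega

lemma exists_potential [Fintype V] [Fintype E] (F : E → ℝ) {C : Set V}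
    (hF : ∀ μ : List E, LoopIn src rng C μ → 0 < Fpath F μ) :
    ∃ c : ℝ, 0 < c ∧ ∃ φ : V → ℝ, ∀ e, src e ∈ C → rng e ∈ C →
      c ≤ F e - φ (src e) + φ (rng e) := by
  set n := Fintype.card V with hn
  obtain ⟨c, hc, hcl⟩ : ∃ c : ℝ, 0 < c ∧ ∀ μ : List E, μ.length ≤ n → LoopIn src rng C μ →
      c * μ.length ≤ Fpath F μ := by
    have hfin : {μ : List E | μ.length ≤ n ∧ LoopIn src rng C μ}.Finite :=
      (List.finite_length_le E n).subset fun μ h => h.1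
    rcases Set.eq_empty_or_nonempty {μ : List E | μ.length ≤ n ∧ LoopIn src rng C μ} with h | h
    · refine ⟨1, one_pos, fun μ h1 h2 => ?_⟩
      have : μ ∈ {μ : List E | μ.length ≤ n ∧ LoopIn src rng C μ} := ⟨h1, h2⟩
      rw [h] at this
      exact absurd this (Set.notMem_empty _)
    · obtain ⟨m, hm, hmin⟩ := Set.exists_min_image _ (Fpath F) hfin h
      have hpos := hF m hm.2
      refine ⟨Fpath F m / (n + 1), by positivity, fun μ h1 h2 => ?_⟩
      refine le_trans ?_ (hmin μ ⟨h1, h2⟩)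
      rw [div_mul_eq_mul_div, div_le_iff₀ (by positivity)]
      have : (μ.length : ℝ) ≤ n := by exact_mod_cast h1
      gcongr
      linarith
  refine ⟨c, hc, ?_⟩
  set wt : List E → ℝ := fun μ => Fpath F μ - c * μ.length with hwt
  have hadd : ∀ a b, wt (a ++ b) = wt a + wt b := by
    intro a b
    simp only [hwt, Fpath, List.map_append, List.sum_append, List.length_append]
    push_cast
    ring
  have hex : ∀ v : V, ∃ m : List E, (m.length < n ∧ ∃ w, Wk src rng C v m w) ∧
      ∀ μ : List E, μ.length < n → ∀ w, Wk src rng C v μ w → wt m ≤ wt μ := by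
    intro v
    have hfin : {μ : List E | μ.length < n ∧ ∃ w, Wk src rng C v μ w}.Finite :=
      (List.finite_length_lt E n).subset fun μ h => h.1
    have hne : {μ : List E | μ.length < n ∧ ∃ w, Wk src rng C v μ w}.Nonempty :=
      ⟨[], Fintype.card_pos_iff.2 ⟨v⟩, v, rfl⟩
    obtain ⟨m, hm, hmin⟩ := Set.exists_min_image _ wt hfin hne
    exact ⟨m, hm, fun μ h1 w h2 => hmin μ ⟨h1, w, h2⟩⟩
  choose p hp hmin using hex
  refine ⟨fun v => wt (p v), fun e hs hr => ?_⟩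
  obtain ⟨hlen, w, hw⟩ := hp (rng e)
  have hW : Wk src rng C (src e) (e :: p (rng e)) w := ⟨rfl, hs, hr, hw⟩
  have hwe : wt (e :: p (rng e)) = F e - c + wt (p (rng e)) := by
    simp only [hwt, Fpath, List.map_cons, List.sum_cons, List.length_cons]
    push_cast
    ring
  suffices wt (p (src e)) ≤ wt (e :: p (rng e)) by
    show c ≤ F e - wt (p (src e)) + wt (p (rng e))
    linarith
  by_cases hl : (e :: p (rng e)).length < n
  · exact hmin _ _ hl _ hW
  · obtain ⟨a, b, d, u, k0, k1, k2, k3, k4⟩ := Wk_pigeon hW (not_lt.1 hl)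
    have hL : a.length + b.length + d.length ≤ n := by
      have := congrArg List.length k0
      simp at this
      omega
    have hb0 : 0 < b.length := List.length_pos_iff.2 k1
    have hb : 0 ≤ wt b := sub_nonneg.2 (hcl b (by omega) (Wk_loop k3 k1))
    have := hmin (src e) (a ++ d) (by simp; omega) w (Wk_append.2 ⟨u, k2, k4⟩)
    rw [k0, hadd, hadd]
    rw [hadd] at this
    linarith

end Walks

section Final
variable {V E : Type*} [Fintype V] [DecidableEq V] [Fintype E] {src rng : E → V}

lemma Amat_nonneg (F : E → ℝ) (β : ℝ) (v w : V) : 0 ≤ Amat src rng F β v w :=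
  Finset.sum_nonneg fun _ _ => (Real.exp_pos _).le

lemma specRad_shift_le (F : E → ℝ) {C : Set V} (β δ κ : ℝ) (φ : V → ℝ)
    (h : ∀ e, src e ∈ C → rng e ∈ C → κ ≤ δ * (F e - φ (src e) + φ (rng e))) :
    specRadOn (Amat src rng F (β + δ)) C ≤ Real.exp (-κ) * specRadOn (Amat src rng F β) C := by
  unfold specRadOn
  refine @specRad_le_of_entry _ (_) (_) _ _ (fun i j => Amat_nonneg F _ _ _)
    (fun i j => Amat_nonneg F _ _ _) _ (Real.exp_pos _)
    (fun i => Real.exp (-(δ * φ i.1))) (fun i => Real.exp_pos _) ?_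
  rintro ⟨v, hv⟩ ⟨w, hw⟩
  show Amat src rng F (β + δ) v w ≤ _ * Amat src rng F β v w
  unfold Amat
  rw [Finset.mul_sum]
  refine Finset.sum_le_sum fun e he => ?_
  obtain ⟨-, rfl, rfl⟩ := Finset.mem_filter.1 he
  rw [← Real.exp_sub, ← Real.exp_add, ← Real.exp_add, Real.exp_le_exp]
  have := h e hv hw
  simp only
  linarith

lemma Amat_zero (F : E → ℝ) (v w : V) : Amat src rng F 0 v w =
    ((Finset.univ.filter (fun e => src e = v ∧ rng e = w)).card : ℝ) := by
  simp [Amat]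

lemma one_le_Amat (F : E → ℝ) (e : E) : 1 ≤ Amat src rng F 0 (src e) (rng e) := by
  rw [Amat_zero]
  have : 0 < (Finset.univ.filter (fun f => src f = src e ∧ rng f = rng e)).card :=
    Finset.card_pos.2 ⟨e, by simp⟩
  exact_mod_cast this

lemma one_lt_specRad_zero {C : Set V} (hC : GIsComponent src rng C)
    (hnc : ¬ IsCircular src rng C) (F : E → ℝ) : 1 < specRadOn (Amat src rng F 0) C := by
  obtain ⟨e, f, hef, hs, hsC, heC, hfC⟩ := exists_branch hC hnc
  unfold specRadOn
  letI : Fintype C := (Set.toFinite C).fintype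
  letI : DecidableEq C := Classical.decEq _
  refine one_lt_specRad_of_graph (n := C) _ (fun i j => Amat_nonneg F _ _ _) ?_ ⟨src e, hsC⟩ ?_ ?_
  · rintro ⟨u, hu⟩
    obtain ⟨g, rfl, hg⟩ := comp_out hC hu
    exact ⟨⟨rng g, hg⟩, one_le_Amat F g⟩
  · show 2 ≤ ∑ j : C, Amat src rng F 0 (src e) j.1
    by_cases hr : rng e = rng f
    · have h2 : (2 : ℝ) ≤ Amat src rng F 0 (src e) (rng e) := by
        rw [Amat_zero]
        have : 1 < (Finset.univ.filter (fun g => src g = src e ∧ rng g = rng e)).card :=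
          Finset.one_lt_card.2 ⟨e, by simp, f, by simp [hs, hr], hef⟩
        exact_mod_cast this
      exact h2.trans (Finset.single_le_sum (f := fun j : C => Amat src rng F 0 (src e) j.1)
        (fun _ _ => Amat_nonneg F _ _ _) (Finset.mem_univ ⟨rng e, heC⟩))
    · have h1 := one_le_Amat (src := src) (rng := rng) F e
      have h2 := one_le_Amat (src := src) (rng := rng) F f
      rw [← hs] at h2
      have h3 : (⟨rng e, heC⟩ : C) ≠ ⟨rng f, hfC⟩ := fun h => hr (congrArg Subtype.val h)
      have h4 := Finset.add_le_sum (f := fun j : C => Amat src rng F 0 (src e) j.1)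
        (fun _ _ => Amat_nonneg F _ _ _) (Finset.mem_univ ⟨rng e, heC⟩)
        (Finset.mem_univ ⟨rng f, hfC⟩) h3
      simp only at h4
      linarith
  · rintro ⟨u, hu⟩
    obtain ⟨a, ha⟩ := comp_walk hC hu hsC
    induction a generalizing u with
    | nil => simp only [Wk] at ha; subst ha; exact Relation.ReflTransGen.refl
    | cons g a ih =>
      obtain ⟨rfl, h2, h3, h4⟩ := ha
      exact Relation.ReflTransGen.head (b := ⟨rng g, h3⟩) (one_le_Amat F g) (ih _ h3 h4)

end Final

/-- For a non-circular component `C` all of whose loops satisfy `F(μ) > 0`, there is a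
unique `β₀` with `ρ(A(β₀)^C) = 1`; it is positive, and `ρ(A(β)^C) < 1 ↔ β > β₀`. -/
theorem specRad_component_pos_type {V E : Type*} [Fintype V] [DecidableEq V] [Fintype E]
    (src rng : E → V) (F : E → ℝ)
    (C : Set V) (hC : GIsComponent src rng C) (hnc : ¬ IsCircular src rng C)
    (hF : ∀ μ : List E, LoopIn src rng C μ → 0 < Fpath F μ) :
    ∃ β₀ : ℝ, 0 < β₀ ∧ specRadOn (Amat src rng F β₀) C = 1 ∧
      (∀ β : ℝ, specRadOn (Amat src rng F β) C = 1 → β = β₀) ∧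
      (∀ β : ℝ, specRadOn (Amat src rng F β) C < 1 ↔ β₀ < β) := by
  obtain ⟨c, hc, φ, hφ⟩ := exists_potential F hF
  refine exists_root_of_decay (fun β => specRadOn (Amat src rng F β) C) c (∑ e, |F e|) hc ?_ ?_ ?_
  · exact one_lt_specRad_zero hC hnc F
  · intro β δ hδ
    have h := specRad_shift_le (src := src) (rng := rng) F (C := C) β δ (c * δ) φ (fun e h1 h2 => by
      have := mul_le_mul_of_nonneg_left (hφ e h1 h2) hδ
      linarith)
    exact h
  · intro β δ hδ
    have h := specRad_shift_le (src := src) (rng := rng) F (C := C) (β + δ) (-δ) (-((∑ e, |F e|) * δ)) (fun _ => 0)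
      (fun e h1 h2 => by
        have h3 : |F e| ≤ ∑ e, |F e| :=
          Finset.single_le_sum (f := fun e => |F e|) (fun _ _ => abs_nonneg _) (Finset.mem_univ e)
        have := mul_le_mul_of_nonneg_left ((le_abs_self _).trans h3) hδ
        linarith)
    rw [neg_neg, add_neg_cancel_right] at h
    exact h
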